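/- Let m ≥ 3 be odd, σ₀ ∈ {−1, +1}, μ ≥ 0, L, T, τ > 0, and let f : ℝ → ℝ be continuously differentiable. Let q₀, …, q_{m−1} : [0,T] × ℝ → ℝ be C¹ functions, L-periodic in x, satisfying ∂_t q₀ + ∂_x f(q₀) + σ₀ ∂_x q_{m−1} = 0 and, for j ∈ {1, …, m−1}, τ ∂_t q_j + σ₀ (−1)^j ∂_x q_{m−j−1} = σ₀ (−1)^j q_{m−j} − δ_{j,1} μ q₁ (where δ_{j,1} is the Kronecker delta). Then for all t ∈ [0,T], d/dt η(q)(t) = −μ ∫₀^L q₁(t,x)² dx ≤ 0; in particular η(q) is constant when μ = 0. -/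

import Mathlib

open MeasureTheory

/-- Partial derivative with respect to the first (time) variable. -/
noncomputable def pdt (u : ℝ → ℝ → ℝ) : ℝ → ℝ → ℝ :=
  fun t x => deriv (fun s => u s x) t

/-- Partial derivative with respect to the second (space) variable. -/
noncomputable def pdx (u : ℝ → ℝ → ℝ) : ℝ → ℝ → ℝ :=
  fun t x => deriv (fun y => u t y) x

/-!
The quadratic energy density `η` has a flux `Φ`, assembled from the entropy flux of `f` for the
entropy `v ^ 2 / 2` and from the alternating products `(-1) ^ j * q_j * q_{m-1-j}`. Since `m - 1` is
even, these products are invariant under `j ↦ m - 1 - j`, so that both halves of the product rule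
agree and give exactly the first-order terms of the system tested against `q_j`. Since `m` is odd,
the zeroth-order terms `(-1) ^ j * q_j * q_{m-j}` are antisymmetric under `j ↦ m - j` and cancel in
pairs. What remains is the local balance `∂_t η + ∂_x Φ = -μ * q₁ ^ 2`, and `Φ` takes equal values
at the two ends of a period.
-/

section AlternatingSums

variable {R : Type*} [CommRing R]

lemma sum_Ico_neg_one_pow_mul_mul_reflect_eq_zero {m : ℕ} (hm : Odd m) (a : ℕ → R) :
    ∑ j ∈ Finset.Ico 1 m, (-1) ^ j * (a j * a (m - j)) = 0 := by
  refine Finset.sum_involution (fun j _ => m - j) (fun j hj => ?_) (fun j _ _ => by grind)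
    (fun j hj => by grind) (fun j hj => by grind)
  have hjm : j ≤ m := (Finset.mem_Ico.mp hj).2.le
  have hsign : (-1 : R) ^ (m - j + 1) = (-1) ^ j := neg_one_pow_congr (by grind)
  rw [Nat.sub_sub_self hjm, ← hsign]
  ring

lemma sum_range_neg_one_pow_mul_mul_reflect_comm {m : ℕ} (hm : Odd m) (a b : ℕ → R) :
    ∑ j ∈ Finset.range m, (-1) ^ j * (a j * b (m - 1 - j))
      = ∑ j ∈ Finset.range m, (-1) ^ j * (b j * a (m - 1 - j)) := by
  rw [← Finset.sum_range_reflect]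
  refine Finset.sum_congr rfl fun j hj => ?_
  have hsign : (-1 : R) ^ (m - 1 - j) = (-1) ^ j := neg_one_pow_congr (by grind)
  have hjm : j ≤ m - 1 := Nat.le_sub_one_of_lt (Finset.mem_range.mp hj)
  rw [hsign, Nat.sub_sub_self hjm]
  ring

end AlternatingSums

lemma hasDerivAt_sum_neg_one_pow_mul_mul_reflect {𝕜 A : Type*} [NontriviallyNormedField 𝕜]
    [NormedCommRing A] [NormedAlgebra 𝕜 A] {m : ℕ} (hm : Odd m) {u : ℕ → 𝕜 → A} {u' : ℕ → A}
    {x : 𝕜} (hu : ∀ j < m, HasDerivAt (u j) (u' j) x) :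
    HasDerivAt (fun y => ∑ j ∈ Finset.range m, (-1) ^ j * (u j y * u (m - 1 - j) y))
      (2 * ∑ j ∈ Finset.range m, (-1) ^ j * (u j x * u' (m - 1 - j))) x := by
  have hleibniz := HasDerivAt.fun_sum (u := Finset.range m) fun j hj =>
    ((hu j (Finset.mem_range.mp hj)).fun_mul (hu (m - 1 - j) (by grind))).const_mul ((-1) ^ j)
  refine hleibniz.congr_deriv ?_
  simp only [mul_add, Finset.sum_add_distrib,
    sum_range_neg_one_pow_mul_mul_reflect_comm hm u' (u · x)]
  ring

theorem hasDerivAt_intervalIntegral_of_continuous_deriv {𝕜 E : Type*} [RCLike 𝕜]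
    [NormedAddCommGroup E] [NormedSpace ℝ E] [NormedSpace 𝕜 E] {ν : Measure ℝ}
    [IsLocallyFiniteMeasure ν] {F F' : 𝕜 → ℝ → E} (hF : ∀ s, Continuous (F s))
    (hF' : Continuous (Function.uncurry F'))
    (hderiv : ∀ s x, HasDerivAt (fun r => F r x) (F' s x) s) (a b : ℝ) (t : 𝕜) :
    HasDerivAt (fun s => ∫ x in a..b, F s x ∂ν) (∫ x in a..b, F' t x ∂ν) t := by
  obtain ⟨C, hC⟩ := ((isCompact_closedBall t 1).prod
    (isCompact_uIcc (a := a) (b := b))).exists_bound_of_continuousOn hF'.continuousOn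
  exact (intervalIntegral.hasDerivAt_integral_of_dominated_loc_of_deriv_le (bound := fun _ => C)
    (Metric.closedBall_mem_nhds t one_pos)
    (.of_forall fun s => (hF s).aestronglyMeasurable)
    ((hF t).intervalIntegrable _ _)
    (hF'.uncurry_left t).aestronglyMeasurable
    (.of_forall fun x hx s hs => hC (s, x) ⟨hs, Set.uIoc_subset_uIcc hx⟩)
    intervalIntegrable_const
    (.of_forall fun x _ s _ => hderiv s x)).2

section PartialDerivatives

variable {u : ℝ → ℝ → ℝ}

lemma hasDerivAt_pdt {t x : ℝ} (hu : DifferentiableAt ℝ (Function.uncurry u) (t, x)) :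
    HasDerivAt (fun s => u s x) (pdt u t x) t :=
  (hu.comp (f := fun s => (s, x)) t (by fun_prop)).hasDerivAt

lemma hasDerivAt_pdx {t x : ℝ} (hu : DifferentiableAt ℝ (Function.uncurry u) (t, x)) :
    HasDerivAt (u t) (pdx u t x) x :=
  (hu.comp (f := fun y => (t, y)) x (by fun_prop)).hasDerivAt

lemma pdt_eq_fderiv {t x : ℝ} (hu : DifferentiableAt ℝ (Function.uncurry u) (t, x)) :
    pdt u t x = fderiv ℝ (Function.uncurry u) (t, x) (1, 0) :=
  (hu.hasFDerivAt.comp_hasDerivAt (f := fun s => (s, x)) t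
    ((hasDerivAt_id t).prodMk (hasDerivAt_const t x))).deriv

lemma continuous_uncurry_pdt (hu : ContDiff ℝ 1 (Function.uncurry u)) :
    Continuous (Function.uncurry (pdt u)) := by
  have hfderiv : Function.uncurry (pdt u) = fun p => fderiv ℝ (Function.uncurry u) p (1, 0) :=
    funext fun p => pdt_eq_fderiv (hu.differentiable one_ne_zero p)
  rw [hfderiv]
  exact (hu.continuous_fderiv one_ne_zero).clm_apply continuous_const

theorem hasDerivAt_intervalIntegral_pdt (hu : ContDiff ℝ 1 (Function.uncurry u)) (a b t : ℝ) :
    HasDerivAt (fun s => ∫ x in a..b, u s x) (∫ x in a..b, pdt u t x) t :=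
  hasDerivAt_intervalIntegral_of_continuous_deriv (fun s => hu.continuous.uncurry_left s)
    (continuous_uncurry_pdt hu)
    (fun _ _ => hasDerivAt_pdt (hu.differentiable one_ne_zero _)) a b t

end PartialDerivatives

/-- The entropy flux of the conservation law `∂_t v + ∂_x f(v) = 0` for the entropy `v ^ 2 / 2`,
i.e. the primitive of `v * f' v` that vanishes at `0`. It is written after an integration by parts,
so that `f'` need not be integrable. -/
noncomputable def quadraticEntropyFlux (f : ℝ → ℝ) (v : ℝ) : ℝ :=
  v * f v - ∫ w in (0 : ℝ)..v, f w

lemma hasDerivAt_quadraticEntropyFlux {f : ℝ → ℝ} {f' v : ℝ} (hf : Continuous f)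
    (hfv : HasDerivAt f f' v) : HasDerivAt (quadraticEntropyFlux f) (v * f') v := by
  refine (((hasDerivAt_id v).mul hfv).sub (hf.integral_hasStrictDerivAt 0 v).hasDerivAt).congr_deriv
    ?_
  simp only [id]
  ring

/-- The odd-order hyperbolic approximation at the point `(t, x)`: the conservation law for `q 0`,
and the relaxation equations for `q 1, …, q (m - 1)`. The family `q` is indexed by `ℕ`, but only
its first `m` members are unknowns of the system. -/
structure SolvesHyperbolicApproximationAt (m : ℕ) (σ₀ μ τ : ℝ) (f : ℝ → ℝ) (q : ℕ → ℝ → ℝ → ℝ)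
    (t x : ℝ) : Prop where
  conservation : pdt (q 0) t x + pdx (fun s y => f (q 0 s y)) t x + σ₀ * pdx (q (m - 1)) t x = 0
  relaxation : ∀ j ∈ Finset.Icc 1 (m - 1),
    τ * pdt (q j) t x + σ₀ * (-1 : ℝ) ^ j * pdx (q (m - j - 1)) t x
      = σ₀ * (-1 : ℝ) ^ j * q (m - j) t x - (if j = 1 then μ * q 1 t x else 0)

/-- The integrand of the energy `η(q)`. -/
noncomputable def energyDensity (m : ℕ) (τ : ℝ) (q : ℕ → ℝ → ℝ → ℝ) (t x : ℝ) : ℝ :=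
  q 0 t x ^ 2 / 2 + τ / 2 * ∑ j ∈ Finset.Icc 1 (m - 1), q j t x ^ 2

/-- The flux balancing `energyDensity` in the local energy balance; its first term is the flux of
the nonlinearity, its second that of the `σ₀`-terms. -/
noncomputable def energyFlux (m : ℕ) (σ₀ : ℝ) (f : ℝ → ℝ) (q : ℕ → ℝ → ℝ → ℝ) (t x : ℝ) : ℝ :=
  quadraticEntropyFlux f (q 0 t x)
    + σ₀ / 2 * ∑ j ∈ Finset.range m, (-1 : ℝ) ^ j * (q j t x * q (m - 1 - j) t x)

/-- The energy `η(q)` at time `t` over the spatial period `[0, L]`. -/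
noncomputable def energy (m : ℕ) (τ L : ℝ) (q : ℕ → ℝ → ℝ → ℝ) (t : ℝ) : ℝ :=
  ∫ x in (0 : ℝ)..L, energyDensity m τ q t x

section EnergyBalance

variable {m : ℕ} {σ₀ μ τ L : ℝ} {f : ℝ → ℝ} {q : ℕ → ℝ → ℝ → ℝ} {t x : ℝ}

lemma contDiff_uncurry_energyDensity (hm : 0 < m) (τ : ℝ)
    (hq : ∀ j < m, ContDiff ℝ 1 (Function.uncurry (q j))) :
    ContDiff ℝ 1 (Function.uncurry (energyDensity m τ q)) :=
  (((hq 0 hm).pow 2).div_const 2).add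
    (contDiff_const.mul (ContDiff.sum fun j hj => (hq j (by grind)).pow 2))

lemma pdt_energyDensity (hm : 0 < m) (τ : ℝ)
    (hq : ∀ j < m, DifferentiableAt ℝ (Function.uncurry (q j)) (t, x)) :
    pdt (energyDensity m τ q) t x
      = q 0 t x * pdt (q 0) t x
        + ∑ j ∈ Finset.Icc 1 (m - 1), q j t x * (τ * pdt (q j) t x) := by
  have hzero := ((hasDerivAt_pdt (hq 0 hm)).fun_pow 2).div_const 2
  have hsum := HasDerivAt.fun_sum (u := Finset.Icc 1 (m - 1)) fun j hj =>
    (hasDerivAt_pdt (hq j (by grind))).fun_pow 2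
  refine (hzero.fun_add (hsum.const_mul (τ / 2))).deriv.trans ?_
  rw [Finset.mul_sum]
  congr 1
  · ring
  · exact Finset.sum_congr rfl fun j _ => by ring

lemma hasDerivAt_energyFlux (hm : Odd m) (σ₀ : ℝ) (hf : Differentiable ℝ f)
    (hq : ∀ j < m, DifferentiableAt ℝ (Function.uncurry (q j)) (t, x)) :
    HasDerivAt (energyFlux m σ₀ f q t)
      (q 0 t x * pdx (fun s y => f (q 0 s y)) t x
        + σ₀ * ∑ j ∈ Finset.range m, (-1 : ℝ) ^ j * (q j t x * pdx (q (m - 1 - j)) t x)) x := by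
  have hq₀ := hasDerivAt_pdx (hq 0 hm.pos)
  have hf₀ := (hf (q 0 t x)).hasDerivAt
  have hchain : pdx (fun s y => f (q 0 s y)) t x = deriv f (q 0 t x) * pdx (q 0) t x :=
    (hf₀.comp x hq₀).deriv
  have hentropy := (hasDerivAt_quadraticEntropyFlux hf.continuous hf₀).comp x hq₀
  have hproducts := hasDerivAt_sum_neg_one_pow_mul_mul_reflect hm fun j hj =>
    hasDerivAt_pdx (hq j hj)
  refine (hentropy.add (hproducts.const_mul (σ₀ / 2))).congr_deriv ?_
  rw [hchain]
  ring

lemma energyFlux_congr {y : ℝ} (hm : 0 < m) (hxy : ∀ j < m, q j t x = q j t y) :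
    energyFlux m σ₀ f q t x = energyFlux m σ₀ f q t y := by
  unfold energyFlux
  rw [hxy 0 hm]
  congr 2
  refine Finset.sum_congr rfl fun j hj => ?_
  rw [hxy j (Finset.mem_range.mp hj), hxy (m - 1 - j) (by omega)]

lemma SolvesHyperbolicApproximationAt.sum_mul_relaxation (hm : Odd m) (hm₁ : 1 < m)
    (h : SolvesHyperbolicApproximationAt m σ₀ μ τ f q t x) :
    ∑ j ∈ Finset.Icc 1 (m - 1), q j t x * (τ * pdt (q j) t x)
      = -μ * q 1 t x ^ 2
        - σ₀ * ∑ j ∈ Finset.Ico 1 m, (-1 : ℝ) ^ j * (q j t x * pdx (q (m - 1 - j)) t x) := by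
  have hIcc : Finset.Icc 1 (m - 1) = Finset.Ico 1 m := by ext j; grind
  have hterm : ∀ j ∈ Finset.Ico 1 m, q j t x * (τ * pdt (q j) t x)
      = σ₀ * ((-1 : ℝ) ^ j * (q j t x * q (m - j) t x))
        - σ₀ * ((-1 : ℝ) ^ j * (q j t x * pdx (q (m - 1 - j)) t x))
        - (if j = 1 then μ * q 1 t x ^ 2 else 0) := by
    intro j hj
    have hrelax := h.relaxation j (hIcc ▸ hj)
    rw [Nat.sub_right_comm] at hrelax
    rw [eq_sub_of_add_eq hrelax]
    split_ifs with hj₁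
    · subst hj₁; ring
    · ring
  have hone : 1 ∈ Finset.Ico 1 m := Finset.mem_Ico.mpr ⟨le_rfl, hm₁⟩
  rw [hIcc, Finset.sum_congr rfl hterm, Finset.sum_sub_distrib, Finset.sum_sub_distrib,
    ← Finset.mul_sum, ← Finset.mul_sum,
    sum_Ico_neg_one_pow_mul_mul_reflect_eq_zero hm (fun j => q j t x), Finset.sum_ite_eq',
    if_pos hone]
  ring

theorem SolvesHyperbolicApproximationAt.local_energy_balance
    (h : SolvesHyperbolicApproximationAt m σ₀ μ τ f q t x) (hm : Odd m) (hm₁ : 1 < m)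
    (hf : Differentiable ℝ f)
    (hq : ∀ j < m, DifferentiableAt ℝ (Function.uncurry (q j)) (t, x)) :
    HasDerivAt (energyFlux m σ₀ f q t)
      (-μ * q 1 t x ^ 2 - pdt (energyDensity m τ q) t x) x := by
  refine (hasDerivAt_energyFlux hm σ₀ hf hq).congr_deriv ?_
  rw [pdt_energyDensity hm.pos τ hq, h.sum_mul_relaxation hm hm₁, Finset.range_eq_Ico,
    Finset.sum_eq_sum_Ico_succ_bot hm.pos]
  simp only [pow_zero, Nat.sub_zero, zero_add]
  linear_combination q 0 t x * h.conservation

theorem integral_pdt_energyDensity (hm : Odd m) (hm₁ : 1 < m) (hf : Differentiable ℝ f)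
    (hq : ∀ j < m, ContDiff ℝ 1 (Function.uncurry (q j)))
    (hbdry : ∀ j < m, q j t L = q j t 0)
    (hsol : ∀ x ∈ Set.uIcc 0 L, SolvesHyperbolicApproximationAt m σ₀ μ τ f q t x) :
    ∫ x in (0 : ℝ)..L, pdt (energyDensity m τ q) t x = -μ * ∫ x in (0 : ℝ)..L, q 1 t x ^ 2 := by
  have hpdt : Continuous (pdt (energyDensity m τ q) t) :=
    (continuous_uncurry_pdt (contDiff_uncurry_energyDensity hm.pos τ hq)).uncurry_left t
  have hdissipation : Continuous fun x => -μ * q 1 t x ^ 2 :=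
    (((hq 1 hm₁).continuous.uncurry_left t).pow 2).const_mul (-μ)
  have hbalance := intervalIntegral.integral_eq_sub_of_hasDerivAt
    (fun x hx => (hsol x hx).local_energy_balance hm hm₁ hf
      fun j hj => (hq j hj).differentiable one_ne_zero _)
    ((hdissipation.sub hpdt).intervalIntegrable 0 L)
  rw [energyFlux_congr hm.pos hbdry, sub_self,
    intervalIntegral.integral_sub (hdissipation.intervalIntegrable 0 L)
      (hpdt.intervalIntegrable 0 L), intervalIntegral.integral_const_mul] at hbalance
  exact (sub_eq_zero.mp hbalance).symm

theorem hasDerivAt_energy (hm : Odd m) (hm₁ : 1 < m) (hf : Differentiable ℝ f)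
    (hq : ∀ j < m, ContDiff ℝ 1 (Function.uncurry (q j)))
    (hbdry : ∀ j < m, q j t L = q j t 0)
    (hsol : ∀ x ∈ Set.uIcc 0 L, SolvesHyperbolicApproximationAt m σ₀ μ τ f q t x) :
    HasDerivAt (energy m τ L q) (-μ * ∫ x in (0 : ℝ)..L, q 1 t x ^ 2) t :=
  (hasDerivAt_intervalIntegral_pdt (contDiff_uncurry_energyDensity hm.pos τ hq) 0 L t).congr_deriv
    (integral_pdt_energyDensity hm hm₁ hf hq hbdry hsol)

end EnergyBalance

theorem odd_order_hyperbolic_energy_dissipation_general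
    {m : ℕ} (hm : Odd m) (hm₁ : 1 < m) {σ₀ μ τ L T : ℝ} (hμ : 0 ≤ μ) (hL : 0 ≤ L)
    {f : ℝ → ℝ} (hf : Differentiable ℝ f) {q : ℕ → ℝ → ℝ → ℝ}
    (hq : ∀ j < m, ContDiff ℝ 1 (Function.uncurry (q j)))
    (hbdry : ∀ j < m, ∀ t ∈ Set.Icc 0 T, q j t L = q j t 0)
    (hsol : ∀ t ∈ Set.Icc 0 T, ∀ x ∈ Set.Icc 0 L,
      SolvesHyperbolicApproximationAt m σ₀ μ τ f q t x) :
    (∀ t ∈ Set.Icc 0 T,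
      HasDerivWithinAt (energy m τ L q) (-μ * ∫ x in (0 : ℝ)..L, q 1 t x ^ 2) (Set.Icc 0 T) t ∧
        (-μ * ∫ x in (0 : ℝ)..L, q 1 t x ^ 2) ≤ 0) ∧
      (μ = 0 → ∀ t ∈ Set.Icc 0 T, energy m τ L q t = energy m τ L q 0) := by
  have hderiv : ∀ t ∈ Set.Icc 0 T,
      HasDerivAt (energy m τ L q) (-μ * ∫ x in (0 : ℝ)..L, q 1 t x ^ 2) t := fun t ht =>
    hasDerivAt_energy hm hm₁ hf hq (fun j hj => hbdry j hj t ht)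
      (Set.uIcc_of_le hL ▸ hsol t ht)
  refine ⟨fun t ht => ⟨(hderiv t ht).hasDerivWithinAt, ?_⟩, fun hμ₀ => ?_⟩
  · exact mul_nonpos_of_nonpos_of_nonneg (neg_nonpos.mpr hμ)
      (intervalIntegral.integral_nonneg hL fun _ _ => sq_nonneg _)
  · refine constant_of_has_deriv_right_zero (HasDerivAt.continuousOn hderiv) fun s hs => ?_
    simpa [hμ₀] using (hderiv s (Set.Ico_subset_Icc_self hs)).hasDerivWithinAt

/-- Energy dissipation for the generalized odd-order hyperbolic approximation of
`∂_t u + ∂_x f(u) - μ ∂_x² u + σ₀ ∂_x^m u = 0`: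
`d/dt η(q)(t) = -μ ∫₀^L q₁² dx ≤ 0`; in particular the energy is constant
when `μ = 0`. -/
theorem odd_order_hyperbolic_energy_dissipation
    (m : ℕ) (hm : Odd m) (hm3 : 3 ≤ m)
    (σ₀ : ℝ) (hσ : σ₀ = 1 ∨ σ₀ = -1) (μ : ℝ) (hμ : 0 ≤ μ)
    (L T τ : ℝ) (hL : 0 < L) (hT : 0 < T) (hτ : 0 < τ)
    (f : ℝ → ℝ) (hf : ContDiff ℝ 1 f)
    (q : ℕ → ℝ → ℝ → ℝ)
    (hq : ∀ j < m, ContDiff ℝ 1 (Function.uncurry (q j)))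
    (hper : ∀ j < m, ∀ t, Function.Periodic (q j t) L)
    (heq₀ : ∀ t ∈ Set.Icc (0:ℝ) T, ∀ x : ℝ,
      pdt (q 0) t x + pdx (fun s y => f (q 0 s y)) t x
        + σ₀ * pdx (q (m - 1)) t x = 0)
    (heq : ∀ j ∈ Finset.Icc 1 (m - 1), ∀ t ∈ Set.Icc (0:ℝ) T, ∀ x : ℝ,
      τ * pdt (q j) t x + σ₀ * (-1 : ℝ) ^ j * pdx (q (m - j - 1)) t x
        = σ₀ * (-1 : ℝ) ^ j * q (m - j) t x
          - (if j = 1 then μ * q 1 t x else 0)) :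
    (∀ t ∈ Set.Icc (0:ℝ) T,
      HasDerivWithinAt
        (fun s => ∫ x in (0:ℝ)..L,
          (q 0 s x ^ 2 / 2 + τ / 2 * ∑ j ∈ Finset.Icc 1 (m - 1), q j s x ^ 2))
        (- μ * ∫ x in (0:ℝ)..L, q 1 t x ^ 2)
        (Set.Icc (0:ℝ) T) t ∧
      (- μ * ∫ x in (0:ℝ)..L, q 1 t x ^ 2) ≤ 0) ∧
    (μ = 0 → ∀ t ∈ Set.Icc (0:ℝ) T,
      (∫ x in (0:ℝ)..L,
        (q 0 t x ^ 2 / 2 + τ / 2 * ∑ j ∈ Finset.Icc 1 (m - 1), q j t x ^ 2))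
      = ∫ x in (0:ℝ)..L,
        (q 0 0 x ^ 2 / 2 + τ / 2 * ∑ j ∈ Finset.Icc 1 (m - 1), q j 0 x ^ 2)) :=
  odd_order_hyperbolic_energy_dissipation_general hm (by omega) hμ hL.le
    (hf.differentiable one_ne_zero) hq (fun j hj t _ => (hper j hj t).eq)
    fun t ht x _ => ⟨heq₀ t ht x, fun j hj => heq j hj t ht x⟩
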